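/- Let g : ℂ × ℂ → ℂ be a function satisfying, for all Y, Z ∈ ℂ with Y ≠ 0 and Z ≠ 0: (i) g(−Y,−Z) = g(Y,Z), and (ii) Z⁴·g(1/Z, Y) = √−1·g(Y,Z). Define φ(W,Y,Z) = (ζ₈·W/Z², 1/Z, Y) and ε(W,Y,Z) = (−W,−Y,−Z) on the set T' = {(W,Y,Z) ∈ ℂ³ : Y ≠ 0, Z ≠ 0}, where ζ₈ = (1+√−1)/√2. Then: (a) if W² = g(Y,Z) then the image (W',Y',Z') = φ(W,Y,Z) also satisfies W'² = g(Y',Z'); (b) φ and ε commute: φ(ε(W,Y,Z)) = ε(φ(W,Y,Z)); (c) φ(φ(W,Y,Z)) = (√−1·W/(Y²Z²), 1/Y, 1/Z), i.e. the square of φ is the order-4 map of Example 1.1 bis; (d) the fourth iterate of φ equals (W,Y,Z) ↦ (−W,Y,Z) and the eighth iterate of φ is the identity. -/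

import Mathlib

/-- The lift `φ : (W, Y, Z) ↦ (ζ₈·W/Z², 1/Z, Y)` of Example 1.2 bis,
where `ζ₈ = (1+√-1)/√2`. -/
noncomputable def phi2bis : ℂ × ℂ × ℂ → ℂ × ℂ × ℂ :=
  fun p => ((1 + Complex.I) / Real.sqrt 2 * p.1 / p.2.2 ^ 2, 1 / p.2.2, p.2.1)

/-- The Enriques involution `ε : (W, Y, Z) ↦ (-W, -Y, -Z)`. -/
def epsbis : ℂ × ℂ × ℂ → ℂ × ℂ × ℂ := fun p => (-p.1, -p.2.1, -p.2.2)

/-- The set `T' = {(W,Y,Z) ∈ ℂ³ : Y ≠ 0, Z ≠ 0}`. -/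
def Tset' : Set (ℂ × ℂ × ℂ) := {p | p.2.1 ≠ 0 ∧ p.2.2 ≠ 0}

/-! The map `(Y, Z) ↦ (1/Z, Y)` has order 4. Along the orbit `(Y, Z)`, `(1/Z, Y)`, `(1/Y, 1/Z)`,
`(Z, 1/Y)` the fibre coordinate `W` is multiplied by `c` and by `Z⁻ⁿ`, `Y⁻ⁿ`, `Zⁿ`, `Yⁿ` in turn.
The last four factors cancel, so the fourth power of the lift only multiplies `W` by `c⁴`, which is
`-1` for a primitive eighth root of unity `c`. -/

/-- The lift `(W, Y, Z) ↦ (c·W/Zⁿ, 1/Z, Y)` of the order-4 automorphism `(Y, Z) ↦ (1/Z, Y)` of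
`ℙ¹ × ℙ¹` to the total space of `𝒪(n, n)`, the ambient space of the double covers `W² = g(Y, Z)`
branched in bidegree `(2n, 2n)`. It is written in the affine coordinates `Y, Z` and the fibre
coordinate `W`, and is meaningful only for `Z ≠ 0`. -/
def quarterTurnLift {K : Type*} [Field K] (c : K) (n : ℕ) (p : K × K × K) : K × K × K :=
  (c * p.1 / p.2.2 ^ n, 1 / p.2.2, p.2.1)

namespace quarterTurnLift

variable {K : Type*} [Field K] {c : K} {n : ℕ}

theorem sq_fst_eq_of_sq_eq {g : K → K → K} {W Y Z : K} (hZ : Z ≠ 0)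
    (hinv : Z ^ (2 * n) * g (1 / Z) Y = c ^ 2 * g Y Z) (hW : W ^ 2 = g Y Z) :
    (quarterTurnLift c n (W, Y, Z)).1 ^ 2 = g (1 / Z) Y :=
  calc
    (c * W / Z ^ n) ^ 2 = c ^ 2 * g Y Z / Z ^ (2 * n) := by
      rw [div_pow, mul_pow, hW, ← pow_mul, mul_comm n]
    _ = g (1 / Z) Y := by
      rw [← hinv, mul_div_cancel_left₀ _ (pow_ne_zero _ hZ)]

theorem map_neg (hn : Even n) (p : K × K × K) :
    quarterTurnLift c n (-p) = -quarterTurnLift c n p := by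
  ext <;> simp [quarterTurnLift, hn.neg_pow, neg_div, inv_neg]

variable (c n)

theorem apply_apply (W Y Z : K) :
    quarterTurnLift c n (quarterTurnLift c n (W, Y, Z)) =
      (c ^ 2 * W / (Y ^ n * Z ^ n), 1 / Y, 1 / Z) := by
  refine Prod.ext ?_ rfl
  change c * (c * W / Z ^ n) / Y ^ n = c ^ 2 * W / (Y ^ n * Z ^ n)
  ring

theorem iterate_four (W : K) {Y Z : K} (hY : Y ≠ 0) (hZ : Z ≠ 0) :
    (quarterTurnLift c n)^[4] (W, Y, Z) = (c ^ 4 * W, Y, Z) :=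
  calc
    (quarterTurnLift c n)^[4] (W, Y, Z)
    _ = quarterTurnLift c n (quarterTurnLift c n
          (c ^ 2 * W / (Y ^ n * Z ^ n), 1 / Y, 1 / Z)) := by
      rw [← apply_apply]; rfl
    _ = (c ^ 2 * (c ^ 2 * W / (Y ^ n * Z ^ n)) / ((1 / Y) ^ n * (1 / Z) ^ n),
          1 / (1 / Y), 1 / (1 / Z)) := apply_apply c n ..
    _ = (c ^ 4 * W, Y, Z) := by
      simp only [one_div_one_div, one_div_pow, Prod.mk.injEq, and_true]
      field_simp

end quarterTurnLift

theorem stmt_11_general {K : Type*} [Field K] {c i : K} {n : ℕ} (hn : Even n)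
    (hc : c ^ 2 = i) (hi : i ^ 2 = -1) (g : K → K → K)
    (hinv : ∀ Y Z : K, Y ≠ 0 → Z ≠ 0 → Z ^ (2 * n) * g (1 / Z) Y = i * g Y Z) :
    (∀ W Y Z : K, Y ≠ 0 → Z ≠ 0 → W ^ 2 = g Y Z →
      (quarterTurnLift c n (W, Y, Z)).1 ^ 2 =
        g (quarterTurnLift c n (W, Y, Z)).2.1 (quarterTurnLift c n (W, Y, Z)).2.2) ∧
    (∀ p : K × K × K, p.2.1 ≠ 0 ∧ p.2.2 ≠ 0 →
      quarterTurnLift c n (-p) = -quarterTurnLift c n p) ∧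
    (∀ W Y Z : K, Y ≠ 0 ∧ Z ≠ 0 →
      quarterTurnLift c n (quarterTurnLift c n (W, Y, Z)) =
        (i * W / (Y ^ n * Z ^ n), 1 / Y, 1 / Z)) ∧
    (∀ W Y Z : K, Y ≠ 0 ∧ Z ≠ 0 → (quarterTurnLift c n)^[4] (W, Y, Z) = (-W, Y, Z)) ∧
    (∀ p : K × K × K, p.2.1 ≠ 0 ∧ p.2.2 ≠ 0 → (quarterTurnLift c n)^[8] p = p) := by
  subst hc
  have iterate_four (W Y Z : K) (h : Y ≠ 0 ∧ Z ≠ 0) :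
      (quarterTurnLift c n)^[4] (W, Y, Z) = (-W, Y, Z) := by
    rw [quarterTurnLift.iterate_four c n W h.1 h.2, pow_mul c 2 2, hi, neg_one_mul]
  refine ⟨fun W Y Z hY hZ => quarterTurnLift.sq_fst_eq_of_sq_eq hZ (hinv Y Z hY hZ),
    fun p _ => quarterTurnLift.map_neg hn p,
    fun W Y Z _ => quarterTurnLift.apply_apply c n W Y Z, iterate_four, ?_⟩
  rintro ⟨W, Y, Z⟩ h
  rw [Function.iterate_add_apply _ 4 4, iterate_four W Y Z h, iterate_four (-W) Y Z h, neg_neg]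

theorem one_add_I_div_sqrt_two_sq : ((1 + Complex.I) / (Real.sqrt 2 : ℂ)) ^ 2 = Complex.I := by
  have sqrt_two_sq : (Real.sqrt 2 : ℂ) ^ 2 = 2 := by
    exact_mod_cast Real.sq_sqrt (zero_le_two (α := ℝ))
  rw [div_pow, sqrt_two_sq]
  linear_combination (1 / 2 : ℂ) * Complex.I_sq

/-- Example 1.2 bis: if `g` satisfies `g(-Y,-Z) = g(Y,Z)` and
`Z⁴·g(1/Z,Y) = √-1·g(Y,Z)` for all nonzero `Y, Z`, then the K3 locus `W² = g(Y,Z)` is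
preserved by `φ`, `φ` and `ε` commute on `T'`, the square of `φ` is the order-4 map
`(W,Y,Z) ↦ (√-1·W/(Y²Z²), 1/Y, 1/Z)` of Example 1.1 bis, the fourth iterate of `φ`
equals `(W,Y,Z) ↦ (-W,Y,Z)`, and the eighth iterate of `φ` is the identity. -/
theorem stmt_11 (g : ℂ → ℂ → ℂ)
    (hsym : ∀ Y Z : ℂ, Y ≠ 0 → Z ≠ 0 → g (-Y) (-Z) = g Y Z)
    (hinv : ∀ Y Z : ℂ, Y ≠ 0 → Z ≠ 0 →
      Z ^ 4 * g (1 / Z) Y = Complex.I * g Y Z) :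
    (∀ W Y Z : ℂ, Y ≠ 0 → Z ≠ 0 → W ^ 2 = g Y Z →
      (phi2bis (W, Y, Z)).1 ^ 2 = g (phi2bis (W, Y, Z)).2.1 (phi2bis (W, Y, Z)).2.2) ∧
    (∀ p ∈ Tset', phi2bis (epsbis p) = epsbis (phi2bis p)) ∧
    (∀ W Y Z : ℂ, (W, Y, Z) ∈ Tset' →
      phi2bis (phi2bis (W, Y, Z)) =
        (Complex.I * W / (Y ^ 2 * Z ^ 2), 1 / Y, 1 / Z)) ∧
    (∀ W Y Z : ℂ, (W, Y, Z) ∈ Tset' → phi2bis^[4] (W, Y, Z) = (-W, Y, Z)) ∧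
    (∀ p ∈ Tset', phi2bis^[8] p = p) :=
  stmt_11_general even_two one_add_I_div_sqrt_two_sq Complex.I_sq g hinv
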